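/- Monotonicity of shortcut quality: let 1 ≤ i' ≤ i ≤ j ≤ j' ≤ m be indices and α ≥ 0. If d_F(τ_{i',j'}, P[t_{i'}, t_{j'}]) ≤ α, then d_F(τ_{i,j}, P[t_i, t_j]) ≤ 2α. -/

import Mathlib

/-!
A matching of a curve `f` with `Q` restricts to a matching, of no larger width, of `Q[a, b]` with a
subcurve of `f`. When `f` is a line segment, so is that subcurve; its endpoints are close to `Q a`
and `Q b`, so by convexity of the norm the whole subcurve is just as close to the shortcut from
`Q a` to `Q b`. The triangle inequality for the Fréchet distance then costs the factor `2`. The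
infimum over reparametrizations need not be attained, so the argument is run for every width
`β > α`.
-/

open Set

noncomputable section

/-- Points in `ℝ^d`. -/
abbrev Pt (d : ℕ) : Type := EuclideanSpace ℝ (Fin d)

/-- A reparametrization: a continuous strictly increasing bijection of `[0,1]` onto itself. -/
def IsReparam (γ : ℝ → ℝ) : Prop :=
  ContinuousOn γ (Icc 0 1) ∧ StrictMonoOn γ (Icc 0 1) ∧ γ '' Icc 0 1 = Icc 0 1

/-- The Fréchet distance `d_F(P,Q) = inf_γ sup_{t ∈ [0,1]} ‖P(γ(t)) - Q(t)‖`
(only the values of the curves on `[0,1]` are relevant). -/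
def frechetDist {d : ℕ} (P Q : ℝ → Pt d) : ℝ :=
  ⨅ γ : {γ : ℝ → ℝ // IsReparam γ}, ⨆ s : Icc (0:ℝ) 1, ‖P (γ.1 s.1) - Q s.1‖

/-- The linearly parametrized line segment from `a` to `b`. -/
def seg {d : ℕ} (a b : Pt d) : ℝ → Pt d := fun s => (1 - s) • a + s • b

/-- The subcurve `P[a,b]` of `P`, linearly reparametrized over `[0,1]`. -/
def subcurve {d : ℕ} (P : ℝ → Pt d) (a b : ℝ) : ℝ → Pt d := fun s => P (a + s * (b - a))

/-- The polygonal curve with vertex sequence `pts 0, …, pts n`, uniformly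
parametrized over `[0,1]`. -/
def polyline {d n : ℕ} (pts : Fin (n + 1) → Pt d) : ℝ → Pt d := fun s =>
  if h : n = 0 then pts 0
  else
    let i : ℕ := min ⌊s * n⌋₊ (n - 1)
    have hi : i < n := lt_of_le_of_lt (min_le_right _ _) (by omega)
    (1 - (s * n - i)) • pts ⟨i, hi.trans n.lt_succ_self⟩ +
      (s * n - i) • pts ⟨i + 1, Nat.succ_lt_succ hi⟩

/-- `f ∈ 𝕏^d_ℓ`: `f` is a polygonal curve with at most `ℓ` vertices. -/
def IsPolygonal {d : ℕ} (f : ℝ → Pt d) (ℓ : ℕ) : Prop :=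
  ∃ n : ℕ, n + 1 ≤ ℓ ∧ ∃ pts : Fin (n + 1) → Pt d, f = polyline pts

/-- Concatenation of two curves (each parametrized over `[0,1]`). -/
def concat {d : ℕ} (f g : ℝ → Pt d) : ℝ → Pt d := fun s =>
  if s ≤ 1 / 2 then f (2 * s) else g (2 * s - 1)

/-- `CostLE P m t C Δ` states that the clustering cost satisfies `φ(P,C) ≤ Δ`:
there is a family `I` of index pairs `(i,j)`, `1 ≤ i < j ≤ m`, with
`⋃_{(i,j) ∈ I} [t i, t j] = [0,1]`, such that every corresponding subcurve is
within Fréchet distance `Δ` of some center in `C`. -/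
def CostLE {d : ℕ} (P : ℝ → Pt d) (m : ℕ) (t : ℕ → ℝ) (C : Set (ℝ → Pt d)) (Δ : ℝ) : Prop :=
  ∃ I : Set (ℕ × ℕ),
    (∀ q ∈ I, 1 ≤ q.1 ∧ q.1 < q.2 ∧ q.2 ≤ m) ∧
    (⋃ q ∈ I, Icc (t q.1) (t q.2)) = Icc (0:ℝ) 1 ∧
    ∀ q ∈ I, ∃ c ∈ C, frechetDist (subcurve P (t q.1) (t q.2)) c ≤ Δ

/-- The set `r_Q` of the set system `R` (ground set `{1,…,m−1}`):
`r_Q = {z : ∃ i ≤ z < j, d_F(Q, P[t_i,t_j]) ≤ Δ}`. -/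
def rSet {d : ℕ} (P : ℝ → Pt d) (m : ℕ) (t : ℕ → ℝ) (Δ : ℝ) (Q : ℝ → Pt d) : Set ℕ :=
  {z | 1 ≤ z ∧ z < m ∧ ∃ i j, 1 ≤ i ∧ i ≤ z ∧ z < j ∧ j ≤ m ∧
    frechetDist Q (subcurve P (t i) (t j)) ≤ Δ}

theorem image_add_mul_sub_Icc {a b : ℝ} (hab : a ≤ b) :
    (fun s => a + s * (b - a)) '' Icc 0 1 = Icc a b := by
  simpa only [smul_eq_mul] using (segment_eq_image' ℝ a b).symm.trans (segment_eq_Icc hab)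

theorem mapsTo_add_mul_sub_Icc {a b : ℝ} (hab : a ≤ b) :
    MapsTo (fun s => a + s * (b - a)) (Icc 0 1) (Icc a b) :=
  mapsTo_iff_image_subset.2 (image_add_mul_sub_Icc hab).subset

namespace IsReparam

variable {γ δ : ℝ → ℝ}

protected theorem id : IsReparam id :=
  ⟨continuousOn_id, strictMonoOn_id, image_id _⟩

theorem mapsTo (hγ : IsReparam γ) : MapsTo γ (Icc 0 1) (Icc 0 1) :=
  mapsTo_iff_image_subset.2 hγ.2.2.subset

protected theorem comp (hγ : IsReparam γ) (hδ : IsReparam δ) : IsReparam (γ ∘ δ) :=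
  ⟨hγ.1.comp hδ.1 hδ.mapsTo, hγ.2.1.comp hδ.2.1 hδ.mapsTo, by
    rw [image_comp, hδ.2.2, hγ.2.2]⟩

theorem of_map_zero_of_map_one (hc : ContinuousOn γ (Icc 0 1)) (hm : StrictMonoOn γ (Icc 0 1))
    (h0 : γ 0 = 0) (h1 : γ 1 = 1) : IsReparam γ := by
  refine ⟨hc, hm, Subset.antisymm ?_ ?_⟩
  · simpa only [h0, h1] using hm.monotoneOn.image_Icc_subset
  · simpa only [h0, h1] using intermediate_value_Icc zero_le_one hc

theorem exists_restrict (hγ : IsReparam γ) {a b : ℝ} (ha : 0 ≤ a) (hab : a < b) (hb : b ≤ 1) :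
    ∃ δ, IsReparam δ ∧ ∀ s, γ a + δ s * (γ b - γ a) = γ (a + s * (b - a)) := by
  have hlen : 0 < γ b - γ a :=
    sub_pos.2 (hγ.2.1 ⟨ha, hab.le.trans hb⟩ ⟨ha.trans hab.le, hb⟩ hab)
  have hmaps : MapsTo (fun s => a + s * (b - a)) (Icc 0 1) (Icc 0 1) :=
    (mapsTo_add_mul_sub_Icc hab.le).mono_right (Icc_subset_Icc ha hb)
  refine ⟨fun s => (γ (a + s * (b - a)) - γ a) / (γ b - γ a),
    of_map_zero_of_map_one ?_ ?_ ?_ ?_, fun s => ?_⟩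
  · exact ((hγ.1.comp (by fun_prop) hmaps).sub continuousOn_const).div_const _
  · intro u hu v hv huv
    have harg : a + u * (b - a) < a + v * (b - a) := by
      gcongr
    exact div_lt_div_of_pos_right (sub_lt_sub_right (hγ.2.1 (hmaps hu) (hmaps hv) harg) _) hlen
  · simp
  · simp [hlen.ne']
  · rw [div_mul_cancel₀ _ hlen.ne', add_sub_cancel]

end IsReparam

section FrechetDist

variable {d : ℕ} {f g h : ℝ → Pt d} {c : ℝ}

theorem frechetDist_nonneg : 0 ≤ frechetDist f g :=
  Real.iInf_nonneg fun _ => Real.iSup_nonneg fun _ => norm_nonneg _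

theorem frechetDist_le_of_reparam {γ : ℝ → ℝ} (hγ : IsReparam γ)
    (hc : ∀ s ∈ Icc (0 : ℝ) 1, ‖f (γ s) - g s‖ ≤ c) : frechetDist f g ≤ c := by
  have : Nonempty (Icc (0 : ℝ) 1) := ⟨⟨0, unitInterval.zero_mem⟩⟩
  have hbdd : BddBelow (range fun γ : {γ : ℝ → ℝ // IsReparam γ} =>
      ⨆ s : Icc (0 : ℝ) 1, ‖f (γ.1 s.1) - g s.1‖) :=
    ⟨0, forall_mem_range.2 fun _ => Real.iSup_nonneg fun _ => norm_nonneg _⟩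
  exact (ciInf_le hbdd ⟨γ, hγ⟩).trans (ciSup_le fun s => hc s.1 s.2)

theorem frechetDist_le_of_forall (hc : ∀ s ∈ Icc (0 : ℝ) 1, ‖f s - g s‖ ≤ c) :
    frechetDist f g ≤ c :=
  frechetDist_le_of_reparam .id hc

theorem exists_reparam_of_frechetDist_lt (hf : ContinuousOn f (Icc 0 1))
    (hg : ContinuousOn g (Icc 0 1)) (hc : frechetDist f g < c) :
    ∃ γ, IsReparam γ ∧ ∀ s ∈ Icc (0 : ℝ) 1, ‖f (γ s) - g s‖ ≤ c := by
  have : Nonempty {γ : ℝ → ℝ // IsReparam γ} := ⟨⟨id, .id⟩⟩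
  obtain ⟨⟨γ, hγ⟩, hlt⟩ := exists_lt_of_ciInf_lt hc
  have hcont : ContinuousOn (fun s => ‖f (γ s) - g s‖) (Icc 0 1) :=
    ((hf.comp hγ.1 hγ.mapsTo).sub hg).norm
  -- Without boundedness the supremum in `frechetDist` would be the junk value `0`.
  have hbdd : BddAbove (range fun s : Icc (0 : ℝ) 1 => ‖f (γ s) - g s‖) := by
    simpa only [image_eq_range] using isCompact_Icc.bddAbove_image hcont
  exact ⟨γ, hγ, fun s hs => (le_ciSup hbdd ⟨s, hs⟩).trans hlt.le⟩

theorem frechetDist_triangle (hf : ContinuousOn f (Icc 0 1)) (hg : ContinuousOn g (Icc 0 1))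
    (hh : ContinuousOn h (Icc 0 1)) :
    frechetDist f h ≤ frechetDist f g + frechetDist g h := by
  refine le_of_forall_pos_le_add fun ε hε => ?_
  obtain ⟨γ, hγ, hfg⟩ :=
    exists_reparam_of_frechetDist_lt hf hg (lt_add_of_pos_right _ (half_pos hε))
  obtain ⟨δ, hδ, hgh⟩ :=
    exists_reparam_of_frechetDist_lt hg hh (lt_add_of_pos_right _ (half_pos hε))
  refine frechetDist_le_of_reparam (hγ.comp hδ) fun s hs => ?_
  calc ‖f (γ (δ s)) - h s‖
      ≤ ‖f (γ (δ s)) - g (δ s)‖ + ‖g (δ s) - h s‖ := norm_sub_le_norm_sub_add_norm_sub _ _ _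
    _ ≤ (frechetDist f g + ε / 2) + (frechetDist g h + ε / 2) :=
        add_le_add (hfg _ (hδ.mapsTo hs)) (hgh s hs)
    _ = frechetDist f g + frechetDist g h + ε := by ring

end FrechetDist

section SegSubcurve

variable {d : ℕ}

theorem continuous_seg (x y : Pt d) : Continuous (seg x y) := by
  unfold seg
  fun_prop

theorem subcurve_seg (x y : Pt d) (u v : ℝ) :
    subcurve (seg x y) u v = seg (seg x y u) (seg x y v) := by
  ext1 s
  simp only [subcurve, seg]
  module

theorem subcurve_subcurve (P : ℝ → Pt d) (a b u v : ℝ) :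
    subcurve (subcurve P a b) u v = subcurve P (a + u * (b - a)) (a + v * (b - a)) := by
  ext1 s
  simp only [subcurve]
  ring_nf

theorem continuousOn_subcurve {P : ℝ → Pt d} {a b : ℝ} (hP : ContinuousOn P (Icc a b))
    (hab : a ≤ b) : ContinuousOn (subcurve P a b) (Icc 0 1) :=
  hP.comp (by fun_prop) (mapsTo_add_mul_sub_Icc hab)

theorem frechetDist_seg_subcurve_self (P : ℝ → Pt d) (a : ℝ) :
    frechetDist (seg (P a) (P a)) (subcurve P a a) = 0 := by
  refine le_antisymm (frechetDist_le_of_forall fun s _ => ?_) frechetDist_nonneg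
  simp [seg, subcurve, ← add_smul]

theorem frechetDist_seg_seg_le {x y x' y' : Pt d} {c : ℝ} (hx : ‖x - x'‖ ≤ c)
    (hy : ‖y - y'‖ ≤ c) : frechetDist (seg x y) (seg x' y') ≤ c := by
  refine frechetDist_le_of_forall fun s hs => ?_
  have hdiff : seg x y s - seg x' y' s = (1 - s) • (x - x') + s • (y - y') := by
    simp only [seg]
    module
  rw [hdiff, ← mem_closedBall_zero_iff]
  exact convex_closedBall 0 c (mem_closedBall_zero_iff.2 hx) (mem_closedBall_zero_iff.2 hy)
    (sub_nonneg.2 hs.2) hs.1 (sub_add_cancel 1 s)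

theorem frechetDist_subcurve_le_of_reparam {f g : ℝ → Pt d} {γ : ℝ → ℝ} {a b c : ℝ}
    (hγ : IsReparam γ) (hc : ∀ s ∈ Icc (0 : ℝ) 1, ‖f (γ s) - g s‖ ≤ c)
    (ha : 0 ≤ a) (hab : a < b) (hb : b ≤ 1) :
    frechetDist (subcurve f (γ a) (γ b)) (subcurve g a b) ≤ c := by
  obtain ⟨δ, hδ, hrestrict⟩ := hγ.exists_restrict ha hab hb
  refine frechetDist_le_of_reparam hδ fun s hs => ?_
  simp only [subcurve, hrestrict]
  exact hc _ (Icc_subset_Icc ha hb (mapsTo_add_mul_sub_Icc hab.le hs))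

theorem frechetDist_seg_subcurve_le_two_mul {Q : ℝ → Pt d} {x y : Pt d} {a b α : ℝ}
    (hQ : ContinuousOn Q (Icc 0 1)) (ha : 0 ≤ a) (hab : a < b) (hb : b ≤ 1)
    (hα : frechetDist (seg x y) Q ≤ α) :
    frechetDist (seg (Q a) (Q b)) (subcurve Q a b) ≤ 2 * α := by
  suffices hβ : ∀ β > α, frechetDist (seg (Q a) (Q b)) (subcurve Q a b) / 2 ≤ β by
    linarith [le_of_forall_gt_imp_ge_of_dense hβ]
  intro β hαβ
  obtain ⟨γ, hγ, hclose⟩ :=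
    exists_reparam_of_frechetDist_lt (continuous_seg x y).continuousOn hQ (hα.trans_lt hαβ)
  have hshortcut : frechetDist (seg (Q a) (Q b)) (subcurve (seg x y) (γ a) (γ b)) ≤ β := by
    rw [subcurve_seg]
    exact frechetDist_seg_seg_le
      ((norm_sub_rev _ _).trans_le (hclose a ⟨ha, hab.le.trans hb⟩))
      ((norm_sub_rev _ _).trans_le (hclose b ⟨ha.trans hab.le, hb⟩))
  have hrestrict : frechetDist (subcurve (seg x y) (γ a) (γ b)) (subcurve Q a b) ≤ β :=
    frechetDist_subcurve_le_of_reparam hγ hclose ha hab hb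
  have htriangle := frechetDist_triangle (continuous_seg (Q a) (Q b)).continuousOn
    (subcurve_seg x y (γ a) (γ b) ▸ (continuous_seg _ _).continuousOn)
    (continuousOn_subcurve (hQ.mono (Icc_subset_Icc ha hb)) hab.le)
  linarith

end SegSubcurve

theorem le_of_forall_le_add_one {α : Type*} [Preorder α] {t : ℕ → α} {n m k l : ℕ}
    (ht : ∀ i, n ≤ i → i < m → t i ≤ t (i + 1)) (hk : n ≤ k) (hkl : k ≤ l) (hl : l ≤ m) :
    t k ≤ t l :=
  monotoneOn_of_le_add_one ordConnected_Icc (fun i _ hi hi' => ht i hi.1 hi'.2)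
    ⟨hk, hkl.trans hl⟩ ⟨hk.trans hkl, hl⟩ hkl

theorem stmt6_general {d : ℕ} {P : ℝ → Pt d} {x y : Pt d} {a' a b b' α : ℝ}
    (hP : ContinuousOn P (Icc a' b')) (ha : a' ≤ a) (hab : a ≤ b) (hb : b ≤ b')
    (hα : frechetDist (seg x y) (subcurve P a' b') ≤ α) :
    frechetDist (seg (P a) (P b)) (subcurve P a b) ≤ 2 * α := by
  rcases hab.eq_or_lt with rfl | hlt
  · rw [frechetDist_seg_subcurve_self]
    exact mul_nonneg zero_le_two (frechetDist_nonneg.trans hα)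
  have hab' : a' ≤ b' := ha.trans (hab.trans hb)
  obtain ⟨u, hu, hua : a' + u * (b' - a') = a⟩ :=
    (image_add_mul_sub_Icc hab').superset ⟨ha, hab.trans hb⟩
  obtain ⟨v, hv, hvb : a' + v * (b' - a') = b⟩ :=
    (image_add_mul_sub_Icc hab').superset ⟨ha.trans hab, hb⟩
  have huv : u < v := by
    rw [← hua, ← hvb] at hlt
    exact lt_of_mul_lt_mul_right (lt_of_add_lt_add_left hlt) (sub_nonneg.2 hab')
  have hshortcut := frechetDist_seg_subcurve_le_two_mul
    (continuousOn_subcurve hP hab') hu.1 huv hv.2 hα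
  have hPa : subcurve P a' b' u = P a := congrArg P hua
  have hPb : subcurve P a' b' v = P b := congrArg P hvb
  rwa [subcurve_subcurve, hPa, hPb, hua, hvb] at hshortcut

/-- Monotonicity of shortcut quality. -/
theorem stmt6 {d : ℕ} (P : ℝ → Pt d) (hP : ContinuousOn P (Icc 0 1))
    (m : ℕ) (hm : 2 ≤ m) (t : ℕ → ℝ) (ht0 : t 1 = 0) (ht1 : t m = 1)
    (htmono : ∀ i, 1 ≤ i → i < m → t i < t (i + 1))
    (i' i j j' : ℕ) (h1 : 1 ≤ i') (h2 : i' ≤ i) (h3 : i ≤ j) (h4 : j ≤ j') (h5 : j' ≤ m)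
    (α : ℝ) (hα : 0 ≤ α)
    (h : frechetDist (seg (P (t i')) (P (t j'))) (subcurve P (t i') (t j')) ≤ α) :
    frechetDist (seg (P (t i)) (P (t j))) (subcurve P (t i) (t j)) ≤ 2 * α := by
  have hle {k l : ℕ} : 1 ≤ k → k ≤ l → l ≤ m → t k ≤ t l :=
    le_of_forall_le_add_one fun n hn hnm => (htmono n hn hnm).le
  have hsub : Icc (t i') (t j') ⊆ Icc 0 1 :=
    Icc_subset_Icc (ht0 ▸ hle le_rfl h1 (by omega)) (ht1 ▸ hle (by omega) h5 le_rfl)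
  exact stmt6_general (hP.mono hsub) (hle h1 h2 (by omega)) (hle (by omega) h3 (by omega))
    (hle (by omega) h4 h5) h
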